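/- Let t be an integer with t > 2. Every (t,2) broadcast S ⊆ ℤ×ℤ satisfies liminf_{n→∞} |S ∩ V_n|/(2n+1)² ≥ 1/(2(t−1)²), where V_n = {(a,b) ∈ ℤ×ℤ : |a| ≤ n, |b| ≤ n}. -/

import Mathlib

open Filter Topology

/-- Graph (L¹) distance on the infinite grid ℤ×ℤ. -/
def gridDist (u v : ℤ × ℤ) : ℕ := (u.1 - v.1).natAbs + (u.2 - v.2).natAbs

open Classical in
/-- Total signal received at `v` from towers of strength `t` located at the points of `S`:
the finite sum `∑_{T ∈ S, dist(v,T) < t} (t − dist(v,T))`. -/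
noncomputable def totalSignal (t : ℕ) (S : Set (ℤ × ℤ)) (v : ℤ × ℤ) : ℕ :=
  ∑ T ∈ (Finset.Icc (v.1 - (t : ℤ)) (v.1 + (t : ℤ)) ×ˢ
      Finset.Icc (v.2 - (t : ℤ)) (v.2 + (t : ℤ))).filter
      (fun T => T ∈ S ∧ gridDist v T < t),
    (t - gridDist v T)

/-- `S` is a `(t,r)` broadcast if every vertex receives total signal at least `r`. -/
def IsBroadcast (t r : ℕ) (S : Set (ℤ × ℤ)) : Prop :=
  ∀ v : ℤ × ℤ, r ≤ totalSignal t S v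

/-- The standard pattern `T(d,e) = {(dx+ey, y) : x, y ∈ ℤ}`. -/
def stdPattern (d e : ℤ) : Set (ℤ × ℤ) := {p | ∃ x y : ℤ, p = (d * x + e * y, y)}

open Classical in
/-- The number of points of `S` in the square `V_n = {(a,b) : |a| ≤ n, |b| ≤ n}`. -/
noncomputable def gridCount (S : Set (ℤ × ℤ)) (n : ℕ) : ℕ :=
  ((Finset.Icc (-(n : ℤ)) (n : ℤ) ×ˢ Finset.Icc (-(n : ℤ)) (n : ℤ)).filter
    (fun v => v ∈ S)).card

/-- The tower at `(p, q)` is within distance `r` of the vertex `(x, y)`. -/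
def Near (r p q x y : ℤ) : Prop :=
  p - x + (q - y) ≤ r ∧ p - x - (q - y) ≤ r ∧ -(p - x) + (q - y) ≤ r ∧ -(p - x) - (q - y) ≤ r

/-- The ball of radius `r` around `(p, q)` contains the edge from `(a, b)` to `(a + 1, b)`. -/
def EdgeNear (r p q a b : ℤ) : Prop := Near r p q a b ∧ Near r p q (a + 1) b

/-- Some tower of `S` covers the edge from `(a, b)` to `(a + 1, b)`. -/
def Covered (S : Set (ℤ × ℤ)) (r a b : ℤ) : Prop :=
  ∃ p q, (p, q) ∈ S ∧ EdgeNear r p q a b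

/-- Two different towers of `S` cover the edge from `(a, b)` to `(a + 1, b)`. -/
def DoublyCovered (S : Set (ℤ × ℤ)) (r a b : ℤ) : Prop :=
  ∃ p q p' q', (p, q) ∈ S ∧ (p', q') ∈ S ∧ (p ≠ p' ∨ q ≠ q') ∧
    EdgeNear r p q a b ∧ EdgeNear r p' q' a b

/-- Every vertex has a tower at distance at most `r - 1` or two towers at distance at most `r`. -/
def TwoReached (S : Set (ℤ × ℤ)) (r : ℤ) : Prop :=
  ∀ x y, (∃ p q, (p, q) ∈ S ∧ Near (r - 1) p q x y) ∨
    ∃ p q p' q', (p, q) ∈ S ∧ (p', q') ∈ S ∧ (p ≠ p' ∨ q ≠ q') ∧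
      Near r p q x y ∧ Near r p' q' x y

/-- `o` is the first coordinate of an endpoint of the edge from `(a, b)` to `(a + 1, b)`, and
`o + s` that of the other endpoint. -/
def EdgeFrame (s o a : ℤ) : Prop := (s = 1 ∧ o = a) ∨ (s = -1 ∧ o = a + 1)

/-- The four-tower configuration around an uncovered edge in which every tower has an endpoint of
the edge as a corner of its ball, together with a fifth tower `(g, h)` above. -/
structure Pinwheel (S : Set (ℤ × ℤ)) (r s o b g h : ℤ) : Prop where
  up : (o, b + r) ∈ S
  back : (o - s * r, b) ∈ S
  down : (o + s, b - r) ∈ S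
  front : (o + s + s * r, b) ∈ S
  near_left : ∀ p q, (p, q) ∈ S → Near r p q o b →
    (p = o ∧ q = b + r) ∨ (p = o - s * r ∧ q = b)
  near_right : ∀ p q, (p, q) ∈ S → Near r p q (o + s) b →
    (p = o + s ∧ q = b - r) ∨ (p = o + s + s * r ∧ q = b)
  extra : (g, h) ∈ S
  extra_side : 0 ≤ s * (g - o - s)
  extra_above : b + 1 ≤ h
  extra_dist : s * (g - o - s) + (h - b - 1) = r

/-- The edge at `(x, y)` compensates for the uncovered edge at `(a, b)`. -/
inductive Compensates (S : Set (ℤ × ℤ)) (r a b x y : ℤ) : Prop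
  | side (s : ℤ) (hs : s = 1 ∨ s = -1) (hx : x = a - s) (hy : y = b)
      (hc : Covered S r (a - 2 * s) b)
  | vertical (hx : x = a) (hy : y = b + 1 ∨ y = b - 1)
      (hc : ∀ a' b', (a' = x ∧ y - 1 ≤ b' ∧ b' ≤ y + 1) ∨ (b' = y ∧ x - 1 ≤ a' ∧ a' ≤ x + 1) →
        Covered S r a' b' ∨ (a' = a ∧ b' = b))
  | diagonal (s u o : ℤ) (hf : EdgeFrame s o a) (hu : u = 1 ∨ u = -1) (hx : x = a - s)
      (hy : y = b + u) (h₁ : (o, b + u * r) ∈ S) (h₂ : (o + s, b - u * r) ∈ S)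
      (hc : ∀ a' b', x - 1 ≤ a' ∧ a' ≤ x + 1 ∧ y - 1 ≤ b' ∧ b' ≤ y + 1 →
        Covered S r a' b' ∨ (a' = a ∧ b' = b))
  | pinwheel (s o g h : ℤ) (hf : EdgeFrame s o a) (hp : Pinwheel S r s o b g h)
      (hxy : (b + 2 ≤ h ∧ x = a ∧ y = b + 2) ∨ (h = b + 1 ∧ x = a + 2 * s ∧ y = b + 1))

section

variable {S : Set (ℤ × ℤ)} {r a b : ℤ}

theorem exists_compensates_of_side {s o p q p' q' : ℤ} (hf : EdgeFrame s o a)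
    (hT : (p, q) ∈ S) (hT' : (p', q') ∈ S) (hne : p ≠ p' ∨ q ≠ q')
    (hn : Near r p q o b) (hn' : Near r p' q' o b)
    (hp : 1 ≤ s * (o - p)) (hp' : 1 ≤ s * (o - p')) :
    ∃ x y, DoublyCovered S r x y ∧ Compensates S r a b x y := by
  unfold Near at hn hn'
  refine ⟨a - s, b, ⟨p, q, p', q', hT, hT', hne, ?_, ?_⟩,
    .side s ?_ rfl rfl ⟨p, q, hT, ?_⟩⟩
  all_goals
    rcases hf with ⟨rfl, rfl⟩ | ⟨rfl, rfl⟩ <;> first | omega | (simp only [EdgeNear, Near]; omega)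

theorem exists_compensates_of_vertical (hr : 2 ≤ r) {s u o p q : ℤ} (hf : EdgeFrame s o a)
    (hu : u = 1 ∨ u = -1) (hT : (o, b + u * r) ∈ S) (hT' : (p, q) ∈ S)
    (hn : Near r p q (o + s) b) (hp : 0 ≤ s * (p - o - s)) (hq : 1 ≤ u * (q - b)) :
    ∃ x y, DoublyCovered S r x y ∧ Compensates S r a b x y := by
  unfold Near at hn
  refine ⟨a, b + u, ⟨o, b + u * r, p, q, hT, hT', ?_, ?_, ?_⟩, .vertical rfl ?_ ?_⟩
  case refine_5 =>
    intro a' b' h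
    by_cases h1 : a' = a ∧ b' = b
    · exact Or.inr h1
    left
    by_cases h2 : a' = a + s
    · refine ⟨p, q, hT', ?_⟩
      rcases hu with rfl | rfl <;> rcases hf with ⟨rfl, rfl⟩ | ⟨rfl, rfl⟩ <;>
        first | omega | (simp only [EdgeNear, Near]; omega)
    · refine ⟨o, b + u * r, hT, ?_⟩
      rcases hu with rfl | rfl <;> rcases hf with ⟨rfl, rfl⟩ | ⟨rfl, rfl⟩ <;>
        first | omega | (simp only [EdgeNear, Near]; omega)
  all_goals
    rcases hu with rfl | rfl <;> rcases hf with ⟨rfl, rfl⟩ | ⟨rfl, rfl⟩ <;>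
      first | omega | (simp only [EdgeNear, Near]; omega)

theorem exists_compensates_of_diagonal (hr : 2 ≤ r) {s u o p q : ℤ} (hf : EdgeFrame s o a)
    (hu : u = 1 ∨ u = -1) (hT : (o, b + u * r) ∈ S) (hD : (o + s, b - u * r) ∈ S)
    (hT' : (p, q) ∈ S) (hn : Near r p q o b) (hp : 1 ≤ s * (o - p)) (hq : 1 ≤ u * (q - b)) :
    ∃ x y, DoublyCovered S r x y ∧ Compensates S r a b x y := by
  unfold Near at hn
  refine ⟨a - s, b + u, ⟨o, b + u * r, p, q, hT, hT', ?_, ?_, ?_⟩,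
    .diagonal s u o hf hu rfl rfl hT hD ?_⟩
  case refine_4 =>
    intro a' b' h
    by_cases h1 : a' = a ∧ b' = b
    · exact Or.inr h1
    left
    by_cases h2 : b' = b + 2 * u ∨ (b' = b + u ∧ a' = a)
    · refine ⟨o, b + u * r, hT, ?_⟩
      rcases hu with rfl | rfl <;> rcases hf with ⟨rfl, rfl⟩ | ⟨rfl, rfl⟩ <;>
        first | omega | (simp only [EdgeNear, Near]; omega)
    · refine ⟨p, q, hT', ?_⟩
      rcases hu with rfl | rfl <;> rcases hf with ⟨rfl, rfl⟩ | ⟨rfl, rfl⟩ <;>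
        first | omega | (simp only [EdgeNear, Near]; omega)
  all_goals
    rcases hu with rfl | rfl <;> rcases hf with ⟨rfl, rfl⟩ | ⟨rfl, rfl⟩ <;>
      first | omega | (simp only [EdgeNear, Near]; omega)

theorem Pinwheel.exists_compensates (hr : 2 ≤ r) {s o g h : ℤ} (hf : EdgeFrame s o a)
    (hp : Pinwheel S r s o b g h) :
    ∃ x y, DoublyCovered S r x y ∧ Compensates S r a b x y := by
  have h1 := hp.extra_side
  have h2 := hp.extra_above
  have h3 := hp.extra_dist
  by_cases hh : b + 2 ≤ h
  · refine ⟨a, b + 2, ⟨_, _, _, _, hp.up, hp.extra, ?_, ?_, ?_⟩,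
      .pinwheel s o g h hf hp (Or.inl ⟨hh, rfl, rfl⟩)⟩
    all_goals
      rcases hf with ⟨rfl, rfl⟩ | ⟨rfl, rfl⟩ <;> first | omega | (simp only [EdgeNear, Near]; omega)
  · refine ⟨a + 2 * s, b + 1, ⟨_, _, _, _, hp.front, hp.extra, ?_, ?_, ?_⟩,
      .pinwheel s o g h hf hp (Or.inr ⟨by omega, rfl, rfl⟩)⟩
    all_goals
      rcases hf with ⟨rfl, rfl⟩ | ⟨rfl, rfl⟩ <;> first | omega | (simp only [EdgeNear, Near]; omega)

/-- Near an endpoint of an uncovered edge there are two towers, both at distance exactly `r` and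
on the far side of that endpoint. -/
theorem TwoReached.exists_pair (hS : TwoReached S r) (hU : ¬ Covered S r a b) {s o : ℤ}
    (hf : EdgeFrame s o a) :
    ∃ p q p' q', (p, q) ∈ S ∧ (p', q') ∈ S ∧ (p ≠ p' ∨ q ≠ q') ∧
      Near r p q o b ∧ Near r p' q' o b := by
  rcases hS o b with ⟨p, q, hT, hn⟩ | h
  · refine absurd ⟨p, q, hT, ?_⟩ hU
    unfold Near at hn
    rcases hf with ⟨rfl, rfl⟩ | ⟨rfl, rfl⟩ <;> first | omega | (simp only [EdgeNear, Near]; omega)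
  · exact h

theorem far_side_of_not_covered (hU : ¬ Covered S r a b) {s o p q : ℤ} (hf : EdgeFrame s o a)
    (hT : (p, q) ∈ S) (hn : Near r p q o b) :
    0 ≤ s * (o - p) ∧ (s * (o - p) + (q - b) = r ∨ s * (o - p) - (q - b) = r) := by
  have h : ¬ EdgeNear r p q a b := fun h => hU ⟨p, q, hT, h⟩
  unfold EdgeNear at h
  unfold Near at h hn
  rcases hf with ⟨rfl, rfl⟩ | ⟨rfl, rfl⟩ <;> omega

theorem exists_corner (hS : TwoReached S r) (hU : ¬ Covered S r a b)
    (H : ¬ ∃ x y, DoublyCovered S r x y ∧ Compensates S r a b x y) {s o : ℤ}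
    (hf : EdgeFrame s o a) : ∃ u, (u = 1 ∨ u = -1) ∧ (o, b + u * r) ∈ S := by
  have key : ∀ p q, (p, q) ∈ S → Near r p q o b → ¬ 1 ≤ s * (o - p) →
      ∃ u, (u = 1 ∨ u = -1) ∧ (o, b + u * r) ∈ S := by
    intro p q hT hn hp
    obtain ⟨h1, h2⟩ := far_side_of_not_covered hU hf hT hn
    have h3 : s * (o - p) = 0 := by omega
    have h4 : p = o := by rcases hf with ⟨rfl, rfl⟩ | ⟨rfl, rfl⟩ <;> omega
    subst h4
    rcases h2 with h2 | h2
    · exact ⟨1, Or.inl rfl, by convert hT using 2; omega⟩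
    · exact ⟨-1, Or.inr rfl, by convert hT using 2; omega⟩
  obtain ⟨p, q, p', q', hT, hT', hne, hn, hn'⟩ := hS.exists_pair hU hf
  by_cases hp : 1 ≤ s * (o - p)
  · by_cases hp' : 1 ≤ s * (o - p')
    · exact absurd (exists_compensates_of_side hf hT hT' hne hn hn' hp hp') H
    · exact key p' q' hT' hn' hp'
  · exact key p q hT hn hp

theorem EdgeFrame.swap {s o : ℤ} (hf : EdgeFrame s o a) : EdgeFrame (-s) (o + s) a := by
  unfold EdgeFrame at *
  omega

/-- If nothing compensates by other means, the towers near an endpoint of an uncovered edge are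
the two corner ones. -/
theorem near_corners (hr : 2 ≤ r) (hU : ¬ Covered S r a b)
    (H : ¬ ∃ x y, DoublyCovered S r x y ∧ Compensates S r a b x y) {s u o : ℤ}
    (hf : EdgeFrame s o a) (hu : u = 1 ∨ u = -1) (hup : (o, b + u * r) ∈ S)
    (hdown : (o + s, b - u * r) ∈ S) {p q : ℤ} (hT : (p, q) ∈ S) (hn : Near r p q o b) :
    (p = o ∧ q = b + u * r) ∨ (p = o - s * r ∧ q = b) := by
  obtain ⟨h1, h2⟩ := far_side_of_not_covered hU hf hT hn
  have hv : ¬ 1 ≤ -u * (q - b) := fun h =>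
    H (exists_compensates_of_vertical hr hf.swap (u := -u) (by omega)
      (by convert hdown using 2; ring) hT (by convert hn using 1; ring)
      (by convert h1 using 1; ring) h)
  have hd : ¬ (1 ≤ s * (o - p) ∧ 1 ≤ u * (q - b)) := fun h =>
    H (exists_compensates_of_diagonal hr hf hu hup hdown hT hn h.1 h.2)
  rcases hu with rfl | rfl <;> rcases hf with ⟨rfl, rfl⟩ | ⟨rfl, rfl⟩ <;> omega

theorem exists_behind (hr : 2 ≤ r) (hS : TwoReached S r) (hU : ¬ Covered S r a b)
    (H : ¬ ∃ x y, DoublyCovered S r x y ∧ Compensates S r a b x y) {s u o : ℤ}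
    (hf : EdgeFrame s o a) (hu : u = 1 ∨ u = -1) (hup : (o, b + u * r) ∈ S)
    (hdown : (o + s, b - u * r) ∈ S) : (o - s * r, b) ∈ S := by
  obtain ⟨p, q, p', q', hT, hT', hne, hn, hn'⟩ := hS.exists_pair hU hf
  rcases near_corners hr hU H hf hu hup hdown hT hn with ⟨h1, h2⟩ | ⟨rfl, rfl⟩
  · rcases near_corners hr hU H hf hu hup hdown hT' hn' with ⟨h3, h4⟩ | ⟨rfl, rfl⟩
    · omega
    · exact hT'
  · exact hT

theorem exists_compensates (hr : 2 ≤ r) (hS : TwoReached S r) (hU : ¬ Covered S r a b) :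
    ∃ x y, DoublyCovered S r x y ∧ Compensates S r a b x y := by
  by_contra H
  obtain ⟨s, o, hf, hup, hdown⟩ :
      ∃ s o, EdgeFrame s o a ∧ (o, b + r) ∈ S ∧ (o + s, b - r) ∈ S := by
    obtain ⟨u, hu, hT⟩ := exists_corner hS hU H (Or.inl ⟨rfl, rfl⟩ : EdgeFrame 1 a a)
    obtain ⟨u', hu', hT'⟩ :=
      exists_corner hS hU H (Or.inr ⟨rfl, rfl⟩ : EdgeFrame (-1) (a + 1) a)
    have hne : u' ≠ u := by
      rintro rfl
      refine H (exists_compensates_of_vertical hr (Or.inl ⟨rfl, rfl⟩) hu' hT hT' ?_ ?_ ?_)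
      all_goals rcases hu' with rfl | rfl <;> first | omega | (simp only [Near]; omega)
    rcases hu with rfl | rfl
    · obtain rfl : u' = -1 := by omega
      exact ⟨1, a, Or.inl ⟨rfl, rfl⟩, by convert hT using 2; ring, by convert hT' using 2; ring⟩
    · obtain rfl : u' = 1 := by omega
      exact ⟨-1, a + 1, Or.inr ⟨rfl, rfl⟩, by convert hT' using 2; ring,
        by convert hT using 2 <;> ring⟩
  have hup' : (o, b + 1 * r) ∈ S := by rwa [one_mul]
  have hdown' : (o + s, b - 1 * r) ∈ S := by rwa [one_mul]
  have hdown'' : (o + s, b + -1 * r) ∈ S := by convert hdown using 2; ring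
  have hup'' : (o + s + -s, b - -1 * r) ∈ S := by convert hup using 2 <;> ring
  have hback := exists_behind hr hS hU H hf (Or.inl rfl) hup' hdown'
  have hfront := exists_behind hr hS hU H hf.swap (Or.inr rfl) hdown'' hup''
  have hl : ∀ p q, (p, q) ∈ S → Near r p q o b →
      (p = o ∧ q = b + r) ∨ (p = o - s * r ∧ q = b) := fun p q hT hn => by
    simpa using near_corners hr hU H hf (Or.inl rfl) hup' hdown' hT hn
  have hrt : ∀ p q, (p, q) ∈ S → Near r p q (o + s) b →
      (p = o + s ∧ q = b - r) ∨ (p = o + s + s * r ∧ q = b) := fun p q hT hn => by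
    have := near_corners hr hU H hf.swap (Or.inr rfl) hdown'' hup'' hT hn
    rcases this with ⟨h1, h2⟩ | ⟨h1, h2⟩
    · exact Or.inl ⟨h1, by linarith⟩
    · exact Or.inr ⟨by linarith, h2⟩
  have key : ∀ p q, (p, q) ∈ S → Near r p q (o + s) (b + 1) → ¬ (p = o ∧ q = b + r) → False := by
    intro p q hT hn hne
    have h1 := hl p q hT
    have h2 := hrt p q hT
    have h3 : 0 ≤ s * (p - o - s) ∧ b + 1 ≤ q ∧ s * (p - o - s) + (q - b - 1) = r := by
      unfold Near at hn h1 h2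
      rcases hf with ⟨rfl, rfl⟩ | ⟨rfl, rfl⟩ <;> omega
    exact H (Pinwheel.exists_compensates hr hf
      ⟨hup, hback, hdown, by convert hfront using 2; ring, hl, hrt, hT, h3.1, h3.2.1, h3.2.2⟩)
  rcases hS (o + s) (b + 1) with ⟨p, q, hT, hn⟩ | ⟨p, q, p', q', hT, hT', hne, hn, hn'⟩
  · have h2 := hrt p q hT
    unfold Near at hn h2
    rcases hf with ⟨rfl, rfl⟩ | ⟨rfl, rfl⟩ <;> omega
  · by_cases h : p = o ∧ q = b + r
    · exact key p' q' hT' hn' (by omega)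
    · exact key p q hT hn h

theorem Pinwheel.covered_or_eq (hr : 2 ≤ r) {s o g h x y : ℤ} (hf : EdgeFrame s o a)
    (hp : Pinwheel S r s o b g h)
    (hxy : (b + 2 ≤ h ∧ x = a ∧ y = b + 2) ∨ (h = b + 1 ∧ x = a + 2 * s ∧ y = b + 1))
    {a' b' : ℤ} (hn : x - 1 ≤ a' ∧ a' ≤ x + 1 ∧ y - 1 ≤ b' ∧ b' ≤ y + 1) :
    Covered S r a' b' ∨ (a' = a + s ∧
      ((x = a ∧ y = b + 2 ∧ b' = b + 1) ∨ (x = a + 2 * s ∧ y = b + 1 ∧ b' = b + 2))) := by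
  have h1 := hp.extra_side
  have h2 := hp.extra_above
  have h3 := hp.extra_dist
  refine or_iff_not_imp_right.2 fun hne => ?_
  rcases hxy with ⟨hh, rfl, rfl⟩ | ⟨hh, rfl, rfl⟩
  · by_cases h4 : a' = x + s
    · refine ⟨g, h, hp.extra, ?_⟩
      rcases hf with ⟨rfl, rfl⟩ | ⟨rfl, rfl⟩ <;> simp only [EdgeNear, Near] <;> omega
    · refine ⟨_, _, hp.up, ?_⟩
      rcases hf with ⟨rfl, rfl⟩ | ⟨rfl, rfl⟩ <;> simp only [EdgeNear, Near] <;> omega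
  · by_cases h4 : b' = b ∨ (b' = b + 1 ∧ a' = a + 3 * s)
    · refine ⟨_, _, hp.front, ?_⟩
      rcases hf with ⟨rfl, rfl⟩ | ⟨rfl, rfl⟩ <;> simp only [EdgeNear, Near] <;> omega
    · refine ⟨g, h, hp.extra, ?_⟩
      rcases hf with ⟨rfl, rfl⟩ | ⟨rfl, rfl⟩ <;> simp only [EdgeNear, Near] <;> omega

theorem Pinwheel.not_diagonal (hr : 2 ≤ r) {s o g h x y a' b' s' u' o' : ℤ}
    (hf : EdgeFrame s o a) (hp : Pinwheel S r s o b g h)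
    (hxy : (b + 2 ≤ h ∧ x = a ∧ y = b + 2) ∨ (h = b + 1 ∧ x = a + 2 * s ∧ y = b + 1))
    (hU' : ¬ Covered S r a' b') (hf' : EdgeFrame s' o' a') (hu' : u' = 1 ∨ u' = -1)
    (hx : x = a' - s') (hy : y = b' + u') (h₁ : (o', b' + u' * r) ∈ S)
    (h₂ : (o' + s', b' - u' * r) ∈ S) : False := by
  have hs' : s' = 1 ∨ s' = -1 := by unfold EdgeFrame at hf'; omega
  obtain ⟨ha', h3⟩ := (hp.covered_or_eq hr hf hxy (a' := a') (b' := b') (by omega)).resolve_left hU'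
  rcases h3 with ⟨h4, h5, h6⟩ | ⟨h4, h5, h6⟩
  · have h7 := hp.near_right _ _ h₂
    obtain rfl : u' = 1 := by omega
    unfold Near at h7
    rcases hf with ⟨rfl, rfl⟩ | ⟨rfl, rfl⟩ <;> rcases hf' with ⟨rfl, rfl⟩ | ⟨rfl, rfl⟩ <;> omega
  · have h7 := hp.near_right _ _ h₁
    obtain rfl : u' = -1 := by omega
    unfold Near at h7
    rcases hf with ⟨rfl, rfl⟩ | ⟨rfl, rfl⟩ <;> rcases hf' with ⟨rfl, rfl⟩ | ⟨rfl, rfl⟩ <;> omega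

theorem Pinwheel.eq_of_same_edge (hr : 2 ≤ r) {s o g h x y a' b' s' o' g' h' : ℤ}
    (hU : ¬ Covered S r a b) (hU' : ¬ Covered S r a' b')
    (hf : EdgeFrame s o a) (hp : Pinwheel S r s o b g h)
    (hxy : (b + 2 ≤ h ∧ x = a ∧ y = b + 2) ∨ (h = b + 1 ∧ x = a + 2 * s ∧ y = b + 1))
    (hf' : EdgeFrame s' o' a') (hp' : Pinwheel S r s' o' b' g' h')
    (hxy' : (b' + 2 ≤ h' ∧ x = a' ∧ y = b' + 2) ∨
      (h' = b' + 1 ∧ x = a' + 2 * s' ∧ y = b' + 1)) : a = a' ∧ b = b' := by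
  have mixed : ∀ {a b s o g h a' b' s' o' g' h' : ℤ}, ¬ Covered S r a b → EdgeFrame s o a →
      Pinwheel S r s o b g h → EdgeFrame s' o' a' → Pinwheel S r s' o' b' g' h' →
      a = a' + 2 * s' → b + 2 = b' + 1 → False := by
    intro a b s o g h a' b' s' o' g' h' hU hf hp hf' hp' ha hb
    have h1 := hp.near_left _ _ hp'.front
    have h2 : ¬ EdgeNear r _ _ a b := fun h => hU ⟨_, _, hp'.front, h⟩
    unfold EdgeNear at h2
    unfold Near at h1 h2
    rcases hf with ⟨rfl, rfl⟩ | ⟨rfl, rfl⟩ <;> rcases hf' with ⟨rfl, rfl⟩ | ⟨rfl, rfl⟩ <;> omega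
  rcases hxy with ⟨-, hx, hy⟩ | ⟨-, hx, hy⟩ <;> rcases hxy' with ⟨-, hx', hy'⟩ | ⟨-, hx', hy'⟩
  · omega
  · exact (mixed hU hf hp hf' hp' (by omega) (by omega)).elim
  · exact (mixed hU' hf' hp' hf hp (by omega) (by omega)).elim
  · have h2 : ¬ EdgeNear r _ _ a' b' := fun h => hU' ⟨_, _, hp.front, h⟩
    unfold EdgeNear at h2
    unfold Near at h2
    rcases hf with ⟨rfl, rfl⟩ | ⟨rfl, rfl⟩ <;> rcases hf' with ⟨rfl, rfl⟩ | ⟨rfl, rfl⟩ <;> omega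

theorem Compensates.eq (hr : 2 ≤ r) {x y a' b' : ℤ} (hU : ¬ Covered S r a b)
    (hU' : ¬ Covered S r a' b') (h : Compensates S r a b x y) (h' : Compensates S r a' b' x y) :
    a = a' ∧ b = b' := by
  cases h with
  | side s hs hx hy hc =>
    cases h' with
    | side s' hs' hx' hy' hc' =>
      by_cases hss : s = s'
      · omega
      · refine (hU' ?_).elim
        convert hc using 1 <;> omega
    | vertical hx' hy' hc' => exact (hc' a b (by omega)).resolve_left hU
    | diagonal s' u' o' hf' hu' hx' hy' h₁' h₂' hc' =>
      exact (hc' a b (by omega)).resolve_left hU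
    | pinwheel s' o' g' h' hf' hp' hxy' =>
      have := (hp'.covered_or_eq hr hf' hxy' (a' := a) (b' := b) (by omega)).resolve_left hU
      unfold EdgeFrame at hf'
      omega
  | vertical hx hy hc =>
    cases h' with
    | side s' hs' hx' hy' hc' =>
      have := (hc a' b' (by omega)).resolve_left hU'
      omega
    | vertical hx' hy' hc' => exact (hc' a b (by omega)).resolve_left hU
    | diagonal s' u' o' hf' hu' hx' hy' h₁' h₂' hc' =>
      exact (hc' a b (by omega)).resolve_left hU
    | pinwheel s' o' g' h' hf' hp' hxy' =>
      have := (hp'.covered_or_eq hr hf' hxy' (a' := a) (b' := b) (by omega)).resolve_left hU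
      unfold EdgeFrame at hf'
      omega
  | diagonal s u o hf hu hx hy h₁ h₂ hc =>
    have hs : s = 1 ∨ s = -1 := by unfold EdgeFrame at hf; omega
    cases h' with
    | side s' hs' hx' hy' hc' =>
      have := (hc a' b' (by omega)).resolve_left hU'
      omega
    | vertical hx' hy' hc' =>
      have := (hc a' b' (by omega)).resolve_left hU'
      omega
    | diagonal s' u' o' hf' hu' hx' hy' h₁' h₂' hc' =>
      exact (hc' a b (by omega)).resolve_left hU
    | pinwheel s' o' g' h' hf' hp' hxy' =>
      exact (hp'.not_diagonal hr hf' hxy' hU hf hu hx hy h₁ h₂).elim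
  | pinwheel s o g h hf hp hxy =>
    cases h' with
    | side s' hs' hx' hy' hc' =>
      have := (hp.covered_or_eq hr hf hxy (a' := a') (b' := b') (by omega)).resolve_left hU'
      unfold EdgeFrame at hf
      omega
    | vertical hx' hy' hc' =>
      have := (hp.covered_or_eq hr hf hxy (a' := a') (b' := b') (by omega)).resolve_left hU'
      unfold EdgeFrame at hf
      omega
    | diagonal s' u' o' hf' hu' hx' hy' h₁' h₂' hc' =>
      exact (hp.not_diagonal hr hf hxy hU' hf' hu' hx' hy' h₁' h₂').elim
    | pinwheel s' o' g' h' hf' hp' hxy' =>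
      exact Pinwheel.eq_of_same_edge hr hU hU' hf hp hxy hf' hp' hxy'

theorem Compensates.bounds {x y : ℤ} (h : Compensates S r a b x y) :
    a - 2 ≤ x ∧ x ≤ a + 2 ∧ b - 2 ≤ y ∧ y ≤ b + 2 := by
  cases h with
  | side s hs hx hy hc => omega
  | vertical hx hy hc => omega
  | diagonal s u o hf hu hx hy h₁ h₂ hc => unfold EdgeFrame at hf; omega
  | pinwheel s o g h hf hp hxy => unfold EdgeFrame at hf; omega

end

/-- A broadcast of strength `t` reaches every vertex twice, in the sense of `TwoReached`. -/
theorem IsBroadcast.twoReached {t : ℕ} {S : Set (ℤ × ℤ)} (hS : IsBroadcast t 2 S) :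
    TwoReached S (t - 1) := by
  classical
  intro x y
  refine or_iff_not_imp_left.2 fun hno => ?_
  have h2 := hS (x, y)
  unfold totalSignal at h2
  have hone : ∀ T ∈ (Finset.Icc (x - (t : ℤ)) (x + (t : ℤ)) ×ˢ
      Finset.Icc (y - (t : ℤ)) (y + (t : ℤ))).filter
      (fun T => T ∈ S ∧ gridDist (x, y) T < t), t - gridDist (x, y) T ≤ 1 := by
    rintro ⟨p, q⟩ hT
    obtain ⟨-, hTS, hd⟩ := Finset.mem_filter.1 hT
    by_contra hlt
    refine hno ⟨p, q, hTS, ?_⟩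
    simp only [gridDist] at hd hlt
    unfold Near
    omega
  have hcard := h2.trans (Finset.sum_le_card_nsmul _ _ 1 hone)
  rw [smul_eq_mul, mul_one] at hcard
  obtain ⟨⟨p, q⟩, hT, ⟨p', q'⟩, hT', hne⟩ := Finset.one_lt_card.1 hcard
  obtain ⟨-, hTS, hd⟩ := Finset.mem_filter.1 hT
  obtain ⟨-, hTS', hd'⟩ := Finset.mem_filter.1 hT'
  simp only [gridDist] at hd hd'
  refine ⟨p, q, p', q', hTS, hTS', ?_, ?_, ?_⟩
  · by_contra hcon
    push Not at hcon
    exact hne (Prod.ext hcon.1 hcon.2)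
  · unfold Near; omega
  · unfold Near; omega

/-- The square `V_n` as a finset. -/
noncomputable def gridBox (n : ℕ) : Finset (ℤ × ℤ) :=
  Finset.Icc (-(n : ℤ)) (n : ℤ) ×ˢ Finset.Icc (-(n : ℤ)) (n : ℤ)

theorem mem_gridBox {n : ℕ} {e : ℤ × ℤ} :
    e ∈ gridBox n ↔ -(n : ℤ) ≤ e.1 ∧ e.1 ≤ n ∧ -(n : ℤ) ≤ e.2 ∧ e.2 ≤ n := by
  simp [gridBox, and_assoc]

theorem card_gridBox (n : ℕ) : (gridBox n).card = (2 * n + 1) ^ 2 := by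
  have h : ((n : ℤ) + 1 - -(n : ℤ)).toNat = 2 * n + 1 := by omega
  rw [gridBox, Finset.card_product, Int.card_Icc, h, sq]

open Classical in
/-- A ball of radius `r` contains at most `2 * r ^ 2` horizontal edges. -/
theorem card_edgeNear_le (r : ℕ) (p q : ℤ) (B : Finset (ℤ × ℤ)) :
    (B.filter fun e => EdgeNear r p q e.1 e.2).card ≤ 2 * r ^ 2 := by
  have hcard : (Finset.Ico (-(r : ℤ)) r ×ˢ Finset.Ico (0 : ℤ) r).card = 2 * r ^ 2 := by
    rw [Finset.card_product, Int.card_Ico, Int.card_Ico]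
    have h1 : ((r : ℤ) - -(r : ℤ)).toNat = 2 * r := by omega
    have h2 : ((r : ℤ) - 0).toNat = r := by omega
    rw [h1, h2]; ring
  rw [← hcard]
  refine Finset.card_le_card_of_injOn
    (fun e => ((e.1 - p) + (e.2 - q), ((e.1 - p) - (e.2 - q) + r) / 2)) ?_ ?_
  · rintro ⟨x, y⟩ he
    have he := (Finset.mem_filter.1 he).2
    simp only [EdgeNear, Near] at he
    simp only [Finset.coe_product, Set.mem_prod, Finset.coe_Ico, Set.mem_Ico]
    omega
  · rintro ⟨x, y⟩ - ⟨x', y'⟩ - heq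
    simp only [Prod.mk.injEq] at heq ⊢
    omega

theorem card_gridBox_le {r : ℕ} (hr : 2 ≤ r) {S : Set (ℤ × ℤ)} (hS : TwoReached S r) (n : ℕ) :
    (2 * n + 1) ^ 2 ≤ gridCount S (n + (r + 2)) * (2 * r ^ 2) := by
  classical
  have hr' : (2 : ℤ) ≤ r := by exact_mod_cast hr
  have hex : ∀ e : ℤ × ℤ, ∃ f : ℤ × ℤ, ¬ Covered S r e.1 e.2 →
      DoublyCovered S r f.1 f.2 ∧ Compensates S r e.1 e.2 f.1 f.2 := by
    intro e
    by_cases hU : Covered S r e.1 e.2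
    · exact ⟨e, fun h => (h hU).elim⟩
    · obtain ⟨x, y, h⟩ := exists_compensates hr' hS hU
      exact ⟨(x, y), fun _ => h⟩
  choose φ hφ using hex
  set P := (gridBox (n + (r + 2))).filter (fun v => v ∈ S) with hP
  have hcount : gridCount S (n + (r + 2)) = P.card := by
    simp only [gridCount, hP, gridBox]
  have hmemP : ∀ p q, (p, q) ∈ S → ∀ e ∈ gridBox (n + 2), EdgeNear r p q e.1 e.2 →
      (p, q) ∈ P := by
    intro p q hT e he hn
    rw [hP, Finset.mem_filter, mem_gridBox]
    rw [mem_gridBox] at he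
    simp only [EdgeNear, Near] at hn
    push_cast at he ⊢
    refine ⟨?_, hT⟩
    omega
  let c : ℤ × ℤ → ℕ := fun e => (P.filter fun T => EdgeNear r T.1 T.2 e.1 e.2).card
  have hsum : ∑ e ∈ gridBox (n + 2), c e ≤ P.card * (2 * r ^ 2) := by
    have := Finset.sum_card_bipartiteAbove_eq_sum_card_bipartiteBelow
      (s := gridBox (n + 2)) (t := P) (fun e T => EdgeNear r T.1 T.2 e.1 e.2)
    simp only [Finset.bipartiteAbove, Finset.bipartiteBelow] at this
    rw [this, ← smul_eq_mul]
    exact Finset.sum_le_card_nsmul _ _ _ fun T _ => card_edgeNear_le r T.1 T.2 _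
  have hc : ∀ e ∈ gridBox (n + 2), ((if Covered S r e.1 e.2 then 1 else 0) +
      if DoublyCovered S r e.1 e.2 then 1 else 0) ≤ c e := by
    intro e he
    by_cases hD : DoublyCovered S r e.1 e.2
    · obtain ⟨p, q, p', q', hT, hT', hne, hn, hn'⟩ := hD
      have : 1 < c e := Finset.one_lt_card.2
        ⟨(p, q), Finset.mem_filter.2 ⟨hmemP p q hT e he hn, hn⟩,
          (p', q'), Finset.mem_filter.2 ⟨hmemP p' q' hT' e he hn', hn'⟩, by
            intro heq
            rw [Prod.mk.injEq] at heq
            omega⟩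
      split_ifs <;> omega
    · by_cases hC : Covered S r e.1 e.2
      · obtain ⟨p, q, hT, hn⟩ := id hC
        have : 0 < c e := Finset.card_pos.2
          ⟨(p, q), Finset.mem_filter.2 ⟨hmemP p q hT e he hn, hn⟩⟩
        rw [if_pos hC, if_neg hD]
        exact this
      · simp [hC, hD]
  have hsum' := (Finset.sum_le_sum hc).trans hsum
  rw [Finset.sum_add_distrib, ← Finset.card_filter, ← Finset.card_filter] at hsum'
  have hcov : ((gridBox n).filter fun e => Covered S r e.1 e.2).card ≤
      ((gridBox (n + 2)).filter fun e => Covered S r e.1 e.2).card := by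
    refine Finset.card_le_card (Finset.filter_subset_filter _ fun e he => ?_)
    rw [mem_gridBox] at he ⊢
    push_cast
    omega
  have hunc : ((gridBox n).filter fun e => ¬ Covered S r e.1 e.2).card ≤
      ((gridBox (n + 2)).filter fun e => DoublyCovered S r e.1 e.2).card := by
    refine Finset.card_le_card_of_injOn φ ?_ ?_
    · intro e he
      obtain ⟨he, hU⟩ := Finset.mem_filter.1 he
      have hb := (hφ e hU).2.bounds
      refine Finset.mem_filter.2 ⟨?_, (hφ e hU).1⟩
      rw [mem_gridBox] at he ⊢
      push_cast
      omega
    · intro e he e' he' heq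
      have hU := (Finset.mem_filter.1 he).2
      have hU' := (Finset.mem_filter.1 he').2
      have h1 := (hφ e hU).2
      rw [heq] at h1
      have h2 := h1.eq hr' hU hU' (hφ e' hU').2
      exact Prod.ext h2.1 h2.2
  have hsplit := Finset.card_filter_add_card_filter_not (s := gridBox n)
    (fun e => Covered S r e.1 e.2)
  rw [card_gridBox] at hsplit
  rw [hcount]
  omega

theorem gridCount_le (S : Set (ℤ × ℤ)) (n : ℕ) : gridCount S n ≤ (2 * n + 1) ^ 2 := by
  classical
  rw [← card_gridBox]
  unfold gridCount gridBox
  exact Finset.card_filter_le _ _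

theorem tendsto_shifted_sq_div (k : ℝ) :
    Tendsto (fun n : ℕ => (2 * ((n : ℝ) - k) + 1) ^ 2 / (2 * (n : ℝ) + 1) ^ 2) atTop (𝓝 1) := by
  have hinv : Tendsto (fun n : ℕ => (2 * (n : ℝ) + 1)⁻¹) atTop (𝓝 0) :=
    (tendsto_atTop_add_const_right _ _
      (tendsto_natCast_atTop_atTop.const_mul_atTop (by norm_num))).inv_tendsto_atTop
  have h : Tendsto (fun n : ℕ => (1 - 2 * k * (2 * (n : ℝ) + 1)⁻¹) ^ 2) atTop (𝓝 1) := by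
    simpa using ((hinv.const_mul (2 * k)).const_sub 1).pow 2
  refine h.congr fun n => ?_
  have : (2 * (n : ℝ) + 1) ≠ 0 := by positivity
  field_simp
  ring

theorem stmt5 (t : ℕ) (ht : 2 < t) (S : Set (ℤ × ℤ)) (hS : IsBroadcast t 2 S) :
    1 / (2 * ((t : ℝ) - 1) ^ 2) ≤
      Filter.atTop.liminf (fun n : ℕ => (gridCount S n : ℝ) / (2 * n + 1) ^ 2) := by
  obtain ⟨r, rfl⟩ : ∃ r, t = r + 1 := ⟨t - 1, by omega⟩
  have hr : 2 ≤ r := by omega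
  have hS' : TwoReached S r := by simpa using hS.twoReached
  have hlim : Tendsto (fun n : ℕ => 1 / (2 * (r : ℝ) ^ 2) *
      ((2 * ((n : ℝ) - (r + 2)) + 1) ^ 2 / (2 * (n : ℝ) + 1) ^ 2)) atTop
      (𝓝 (1 / (2 * (r : ℝ) ^ 2))) := by
    have h := (tendsto_shifted_sq_div ((r : ℝ) + 2)).const_mul (1 / (2 * (r : ℝ) ^ 2))
    rwa [mul_one] at h
  have heq : ((r + 1 : ℕ) : ℝ) - 1 = r := by push_cast; ring
  rw [heq, ← hlim.liminf_eq]
  refine liminf_le_liminf ?_ hlim.isBoundedUnder_ge ?_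
  · filter_upwards [eventually_ge_atTop (r + 2)] with n hn
    obtain ⟨m, rfl⟩ := Nat.exists_eq_add_of_le' hn
    have hmain : ((2 * m + 1) ^ 2 : ℝ) ≤ gridCount S (m + (r + 2)) * (2 * r ^ 2) := by
      exact_mod_cast card_gridBox_le hr hS' m
    have hr0 : (0 : ℝ) < r := by exact_mod_cast (by omega : 0 < r)
    have hm : (((m + (r + 2) : ℕ) : ℝ) - (r + 2)) = m := by push_cast; ring
    rw [hm, ← mul_div_assoc]
    gcongr
    rw [one_div_mul_eq_div, div_le_iff₀ (by positivity)]
    exact hmain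
  · refine IsBoundedUnder.isCoboundedUnder_ge ⟨1, eventually_map.2 (.of_forall fun n => ?_)⟩
    refine div_le_one_of_le₀ ?_ (by positivity)
    exact_mod_cast gridCount_le S n
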